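/- Let n ≥ 1 and λ = (λ₁,…,λ_n) ∈ ℂⁿ be such that ⟨m,λ⟩ = m₁λ₁+…+m_nλ_n ≠ 0 for every m ∈ ℤⁿ with m₁+…+m_n ≥ 1. Let Ω = {m ∈ ℤⁿ : m₁+…+m_n ≥ 1}, a commutative semigroup under addition. Then the scalar mould M on Ω defined by M^∅ = 1 and M^{(m₁,…,m_r)} = ∏_{i=1}^r ⟨m_i + m_{i+1} + … + m_r, λ⟩^{-1} (all denominators being nonzero by the hypothesis) is symmetral. -/

import Mathlib

/-! Statement 19: symmetrality of the linearisation mould M^{(m₁,…,m_r)} = ∏ ⟨m_i+…+m_r, λ⟩⁻¹. -/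

open scoped Classical

/-- Shuffle coefficient `sh(α, β; ω)`: the number of ways of obtaining `ω` by
interdigitating the letters of `α` and those of `β` while preserving their internal order. -/
noncomputable def sh {Ω : Type*} : List Ω → List Ω → List Ω → ℕ
  | [], [], [] => 1
  | _ :: _, _, [] => 0
  | [], _ :: _, [] => 0
  | [], [], _ :: _ => 0
  | [], b :: β, c :: ω => if b = c then sh [] β ω else 0
  | a :: α, [], c :: ω => if a = c then sh α [] ω else 0
  | a :: α, b :: β, c :: ω =>
      (if a = c then sh α (b :: β) ω else 0) +
      (if b = c then sh (a :: α) β ω else 0)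

/-- Mould multiplication `(M × N)^ω = Σ_{ω = ω¹·ω²} M^{ω¹} N^{ω²}`. -/
noncomputable def mmul {Ω A : Type*} [CommRing A] (M N : List Ω → A) : List Ω → A := fun ω =>
  ∑ i ∈ Finset.range (ω.length + 1), M (ω.take i) * N (ω.drop i)

/-- The unit mould `1^•`. -/
def munit {Ω A : Type*} [CommRing A] : List Ω → A := fun ω => match ω with | [] => 1 | _ => 0

/-- `Σ_ω sh(α,β;ω) M^ω`, realized as a finite sum over the permutations of `α ++ β`
(the shuffle coefficient vanishes on any word which is not a permutation of `α ++ β`). -/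
noncomputable def shSum {Ω A : Type*} [CommRing A] (M : List Ω → A) (α β : List Ω) : A :=
  ∑ ω ∈ (α ++ β).permutations.toFinset, sh α β ω • M ω

/-- A mould is alternal if `M^∅ = 0` and all the shuffle sums vanish. -/
def IsAlternal {Ω A : Type*} [CommRing A] (M : List Ω → A) : Prop :=
  M [] = 0 ∧ ∀ α β : List Ω, α ≠ [] → β ≠ [] → shSum M α β = 0

/-- A mould is symmetral if `M^∅ = 1` and the shuffle sums reproduce the products. -/
def IsSymmetral {Ω A : Type*} [CommRing A] (M : List Ω → A) : Prop :=
  M [] = 1 ∧ ∀ α β : List Ω, α ≠ [] → β ≠ [] → shSum M α β = M α * M β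

/-- The list, with multiplicity, of all the shuffles of two words. -/
def shuffles {Ω : Type*} : List Ω → List Ω → List (List Ω)
  | [], β => [β]
  | a :: α, [] => [a :: α]
  | a :: α, b :: β =>
      (shuffles α (b :: β)).map (List.cons a) ++ (shuffles (a :: α) β).map (List.cons b)

theorem perm_append_of_mem_shuffles {Ω : Type*} (α β ω : List Ω) (h : ω ∈ shuffles α β) :
    ω.Perm (α ++ β) := by
  induction α, β using shuffles.induct generalizing ω with
  | case1 β => simp_all [shuffles]
  | case2 a α => simp_all [shuffles]
  | case3 a α b β ih₁ ih₂ =>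
    simp only [shuffles, List.mem_append, List.mem_map] at h
    rcases h with ⟨ω', h, rfl⟩ | ⟨ω', h, rfl⟩
    · exact (ih₁ ω' h).cons a
    · exact ((ih₂ ω' h).cons b).trans List.perm_middle.symm

theorem count_map_cons {Ω : Type*} (a c : Ω) (ω : List Ω) (L : List (List Ω)) :
    (L.map (List.cons a)).count (c :: ω) = if a = c then L.count ω else 0 := by
  split_ifs with h
  · subst h
    exact List.count_map_of_injective L _ (List.cons_injective) ω
  · refine List.count_eq_zero.2 fun hmem => ?_
    obtain ⟨ω', -, h'⟩ := List.mem_map.1 hmem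
    exact h (List.cons.inj h').1

theorem shuffles_nil_right {Ω : Type*} (α : List Ω) : shuffles α [] = [α] := by
  cases α <;> rw [shuffles]

theorem sh_eq_count_shuffles {Ω : Type*} (α β ω : List Ω) :
    sh α β ω = (shuffles α β).count ω := by
  induction α, β, ω using sh.induct
  case case2 a α β =>
    rw [sh, eq_comm, List.count_eq_zero]
    intro h
    simpa using (perm_append_of_mem_shuffles _ _ _ h).length_eq
  all_goals
    simp_all [sh, shuffles, shuffles_nil_right, List.count_append, count_map_cons,
      List.count_singleton]

theorem shSum_eq_sum_shuffles {Ω A : Type*} [CommRing A] (M : List Ω → A) (α β : List Ω) :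
    shSum M α β = ((shuffles α β).map M).sum := by
  simp only [shSum, Finset.sum_list_map_count, sh_eq_count_shuffles]
  symm
  trans ∑ ω ∈ (shuffles α β).toFinset, (shuffles α β).count ω • M ω
  · refine Finset.sum_congr rfl fun ω _ => ?_
    congr 2
    exact lawful_beq_subsingleton _ _
  apply Finset.sum_subset
  · intro ω hω
    simp only [List.mem_toFinset] at hω ⊢
    exact List.mem_permutations.2 (perm_append_of_mem_shuffles α β ω hω)
  · intro ω _ hω
    rw [List.count_eq_zero.2 (by simpa using hω), zero_smul]

/-- The mould `ω ↦ ∏ (w ω_k + … + w ω_r)⁻¹` attached to a weight `w` on the letters. -/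
def suffixMould {Ω K : Type*} [Field K] (w : Ω → K) (ω : List Ω) : K :=
  ∏ k ∈ Finset.range ω.length, (((ω.drop k).map w).sum)⁻¹

theorem suffixMould_cons {Ω K : Type*} [Field K] (w : Ω → K) (a : Ω) (ω : List Ω) :
    suffixMould w (a :: ω) = (((a :: ω).map w).sum)⁻¹ * suffixMould w ω := by
  simp [suffixMould, Finset.prod_range_succ', mul_comm]

theorem sum_map_suffixMould_cons {Ω K : Type*} [Field K] (w : Ω → K) (a : Ω) (γ : List Ω)
    (L : List (List Ω)) (hL : ∀ ω ∈ L, ω.Perm γ) :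
    ((L.map (List.cons a)).map (suffixMould w)).sum =
      (((a :: γ).map w).sum)⁻¹ * (L.map (suffixMould w)).sum := by
  rw [List.map_map, ← List.sum_map_mul_left]
  refine congrArg List.sum (List.map_congr_left fun ω hω => ?_)
  rw [Function.comp_apply, suffixMould_cons, (((hL ω hω).cons a).map w).sum_eq]

theorem sum_shuffles_suffixMould {Ω K : Type*} [Field K] (w : Ω → K)
    (hw : ∀ ω : List Ω, ω ≠ [] → (ω.map w).sum ≠ 0) (α β : List Ω) :
    ((shuffles α β).map (suffixMould w)).sum = suffixMould w α * suffixMould w β := by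
  induction α, β using shuffles.induct with
  | case1 β => simp [shuffles, suffixMould]
  | case2 a α => simp [shuffles, suffixMould]
  | case3 a α b β ih₁ ih₂ =>
    have hα := hw (a :: α) (by simp)
    have hβ := hw (b :: β) (by simp)
    have hαβ := hw (a :: α ++ b :: β) (by simp)
    have hperm : ((b :: (a :: α ++ β)).map w).sum = ((a :: α ++ b :: β).map w).sum :=
      (List.perm_middle.symm.map w).sum_eq
    rw [shuffles, List.map_append, List.sum_append,
      sum_map_suffixMould_cons w a _ _ (perm_append_of_mem_shuffles _ _),
      sum_map_suffixMould_cons w b _ _ (perm_append_of_mem_shuffles _ _), ih₁, ih₂, hperm,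
      ← List.cons_append, suffixMould_cons w a, suffixMould_cons w b]
    rw [List.map_append, List.sum_append] at hαβ ⊢
    field_simp

theorem isSymmetral_suffixMould {Ω K : Type*} [Field K] (w : Ω → K)
    (hw : ∀ ω : List Ω, ω ≠ [] → (ω.map w).sum ≠ 0) : IsSymmetral (suffixMould w) :=
  ⟨by simp [suffixMould], fun α β _ _ => by
    rw [shSum_eq_sum_shuffles, sum_shuffles_suffixMould w hw]⟩

theorem one_le_sum_sum_map_val {n : ℕ} (ω : List {m : Fin n → ℤ // 1 ≤ ∑ i, m i}) (hω : ω ≠ []) :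
    1 ≤ ∑ i, (ω.map Subtype.val).sum i := by
  induction ω with
  | nil => exact absurd rfl hω
  | cons a ω ih =>
    have ha := a.2
    rcases eq_or_ne ω [] with rfl | h
    · simpa using ha
    · have := ih h
      simp only [List.map_cons, List.sum_cons, Pi.add_apply, Finset.sum_add_distrib]
      linarith

theorem sum_map_val_pairing {n : ℕ} (lam : Fin n → ℂ)
    (ω : List {m : Fin n → ℤ // 1 ≤ ∑ i, m i}) :
    ∑ i, ((ω.map Subtype.val).sum i : ℂ) * lam i =
      (ω.map fun m => ∑ i, (m.1 i : ℂ) * lam i).sum := by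
  induction ω with
  | nil => simp
  | cons a ω ih =>
    simp only [List.map_cons, List.sum_cons, Pi.add_apply, Int.cast_add, add_mul,
      Finset.sum_add_distrib, ih]

theorem stmt_19 (n : ℕ) (hn : 1 ≤ n) (lam : Fin n → ℂ)
    (hlam : ∀ m : Fin n → ℤ, 1 ≤ ∑ i, m i → (∑ i, (m i : ℂ) * lam i) ≠ 0) :
    IsSymmetral (fun ω : List {m : Fin n → ℤ // 1 ≤ ∑ i, m i} =>
      ∏ k ∈ Finset.range ω.length,
        (∑ i, ((((ω.drop k).map Subtype.val).sum i : ℂ)) * lam i)⁻¹) := by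
  simp only [sum_map_val_pairing]
  refine isSymmetral_suffixMould _ fun ω hω => ?_
  rw [← sum_map_val_pairing]
  exact hlam _ (one_le_sum_sum_map_val ω hω)
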